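/- arXiv:1509.08263 — 2 statements merged into one kernel-verified Lean document; each statement's English description precedes it below -/
import Mathlib

section
/- Theorem 6.1(ii): with the notation of the context, Σ_α 𝒳_{e_α}·𝓛_{e_α} = n·𝒳_e·𝓛_e and Σ_α 𝒴_{e_α}·𝓛_{e_α} = n·𝒴_e·𝓛_e. -/
open Matrix
open scoped ComplexOrder

/-- The Jordan product of two complex matrices. -/
noncomputable def jordanProd {n : ℕ} (a b : Matrix (Fin n) (Fin n) ℂ) :
    Matrix (Fin n) (Fin n) ℂ :=
  (1 / 2 : ℂ) • (a * b + b * a)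

/-- The Jordan triple product `{uvw} = u∘(v∘w) − v∘(u∘w) + (u∘v)∘w`. -/
noncomputable def jTriple {n : ℕ} (u v w : Matrix (Fin n) (Fin n) ℂ) :
    Matrix (Fin n) (Fin n) ℂ :=
  jordanProd u (jordanProd v w) - jordanProd v (jordanProd u w)
    + jordanProd (jordanProd u v) w

/-- The real inner product `⟨u|v⟩ = (1/n)·Re(tr(u·v))`. -/
noncomputable def jInner {n : ℕ} (u v : Matrix (Fin n) (Fin n) ℂ) : ℝ :=
  (1 / n : ℝ) * ((u * v).trace).re

/-- `𝒴_u = ⟨u|x⟩`. -/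
noncomputable def Yfun {n : ℕ} (x u : Matrix (Fin n) (Fin n) ℂ) : ℝ :=
  jInner u x

/-- `𝓛_u = ⟨u∘x|π⟩`. -/
noncomputable def Lfun {n : ℕ} (x p u : Matrix (Fin n) (Fin n) ℂ) : ℝ :=
  jInner (jordanProd u x) p

/-- `𝓛_{u,v} = ⟨u∘(v∘x) − v∘(u∘x)|π⟩ − μ·i·tr(x·[u,v])/(2·tr x)`. -/
noncomputable def LLfun {n : ℕ} (μ : ℝ) (x p u v : Matrix (Fin n) (Fin n) ℂ) : ℝ :=
  jInner (jordanProd u (jordanProd v x) - jordanProd v (jordanProd u x)) p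
    - μ * (Complex.I * (x * (u * v - v * u)).trace).re / (2 * (x.trace).re)

/-- `𝒳_u = ⟨x|{πuπ}⟩ + n·μ²·Re(tr(x·u))/(tr x)² − μ·i·tr(x·[u,π])/(tr x)`. -/
noncomputable def Xfun {n : ℕ} (μ : ℝ) (x p u : Matrix (Fin n) (Fin n) ℂ) : ℝ :=
  jInner x (jTriple p u p) + (n : ℝ) * μ ^ 2 * ((x * u).trace).re / ((x.trace).re) ^ 2
    - μ * (Complex.I * (x * (u * p - p * u)).trace).re / (x.trace).re

/-!
The functional `𝓛` is represented by `x ∘ π`: associativity of the trace form gives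
`𝓛_u = ⟨u | x ∘ π⟩`. Hence expanding `x ∘ π` in the basis yields `∑ α, f(e_α) 𝓛_{e_α} = f(x ∘ π)`
for every real-linear functional `f`, while `n 𝓛_e = tr (x π)`. Both relations thus say that
`f(x ∘ π) = tr (x π) f(e)`, for `f = 𝒳` and `f = 𝒴`. This holds because a matrix `x` of rank one
factors traces, `tr (x a x b) = tr (x a) tr (x b)`, because `tr (x π)` is real, and
because `tr (x [x ∘ π, π]) = 0`.
-/

section RankOne

variable {K : Type*} [Field K] {m n : Type*} [Fintype n]

theorem exists_eq_vecMulVec_of_rank_le_one [Finite m] {x : Matrix m n K} (hx : x.rank ≤ 1) :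
    ∃ v w, x = vecMulVec v w := by
  classical
  obtain ⟨v, hv⟩ := finrank_le_one_iff.mp hx
  choose c hc using fun j ↦ hv ⟨x.mulVecLin (Pi.single j 1), LinearMap.mem_range_self _ _⟩
  refine ⟨v, c, ?_⟩
  ext i j
  have hcol : c j * v.1 i = x i j := by simpa using congrFun (congrArg Subtype.val (hc j)) i
  rw [vecMulVec_apply, ← hcol, mul_comm]

theorem trace_mul_mul_mul_of_rank_le_one [Fintype m] {x : Matrix m n K} (hx : x.rank ≤ 1)
    (a b : Matrix n m K) : (x * a * x * b).trace = (x * a).trace * (x * b).trace := by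
  obtain ⟨v, w, rfl⟩ := exists_eq_vecMulVec_of_rank_le_one hx
  simp only [vecMulVec_mul, vecMul_vecMulVec, smul_vecMul, trace_vecMulVec, smul_dotProduct,
    smul_eq_mul, dotProduct_comm v]

end RankOne

theorem isSelfAdjoint_trace_mul {R m : Type*} [Fintype m] [CommSemiring R] [StarRing R]
    {a b : Matrix m m R} (ha : a.IsHermitian) (hb : b.IsHermitian) :
    IsSelfAdjoint (a * b).trace := by
  rw [isSelfAdjoint_iff, ← trace_conjTranspose, conjTranspose_mul, ha.eq, hb.eq, trace_mul_comm]

section Jordan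

variable {n : ℕ}

theorem isHermitian_jordanProd {a b : Matrix (Fin n) (Fin n) ℂ} (ha : a.IsHermitian)
    (hb : b.IsHermitian) : (jordanProd a b).IsHermitian := by
  simp [jordanProd, IsHermitian, ha.eq, hb.eq, add_comm]

theorem jTriple_self (u v : Matrix (Fin n) (Fin n) ℂ) : jTriple u v u = u * v * u := by
  simp only [jTriple, jordanProd, smul_add, mul_add, add_mul, Matrix.mul_smul, Matrix.smul_mul,
    mul_assoc]
  module

theorem natCast_mul_jInner (u v : Matrix (Fin n) (Fin n) ℂ) :
    (n : ℝ) * jInner u v = (u * v).trace.re := by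
  rcases Nat.eq_zero_or_pos n with rfl | hn
  · simp [trace]
  · rw [jInner, one_div, mul_inv_cancel_left₀ (by positivity)]

theorem jInner_jordanProd_assoc (u x p : Matrix (Fin n) (Fin n) ℂ) :
    jInner (jordanProd u x) p = jInner u (jordanProd x p) := by
  simp only [jInner, jordanProd, Matrix.mul_smul, Matrix.smul_mul, mul_add, add_mul, trace_smul,
    trace_add, mul_assoc, trace_mul_comm x (u * p)]

theorem natCast_mul_Lfun_one (x p : Matrix (Fin n) (Fin n) ℂ) :
    (n : ℝ) * Lfun x p 1 = (x * p).trace.re := by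
  have hone : jordanProd 1 x = x := by
    rw [jordanProd, one_mul, mul_one]
    module
  rw [Lfun, hone, natCast_mul_jInner]

theorem isLinearMap_Yfun (x : Matrix (Fin n) (Fin n) ℂ) : IsLinearMap ℝ (Yfun x) where
  map_add u v := by simp [Yfun, jInner, add_mul, mul_add]
  map_smul c u := by simp [Yfun, jInner, mul_left_comm]

theorem isLinearMap_Xfun (μ : ℝ) (x p : Matrix (Fin n) (Fin n) ℂ) :
    IsLinearMap ℝ (Xfun μ x p) where
  map_add u v := by
    simp only [Xfun, jInner, jTriple_self, add_mul, mul_add, mul_sub, trace_add, trace_sub,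
      Complex.add_re, Complex.sub_re]
    ring
  map_smul c u := by
    simp only [Xfun, jInner, jTriple_self, Matrix.smul_mul, ← smul_sub, trace_smul,
      Complex.smul_re, mul_smul_comm, smul_eq_mul]
    ring

theorem sum_mul_jInner {ι : Type*} [Fintype ι] {E : ι → Matrix (Fin n) (Fin n) ℂ}
    {f : Matrix (Fin n) (Fin n) ℂ → ℝ} (hf : IsLinearMap ℝ f) {u : Matrix (Fin n) (Fin n) ℂ}
    (hu : u = ∑ α, (jInner (E α) u : ℂ) • E α) : ∑ α, f (E α) * jInner (E α) u = f u := by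
  simp only [Complex.coe_smul] at hu
  calc ∑ α, f (E α) * jInner (E α) u = ∑ α, hf.mk' f (jInner (E α) u • E α) := by
        simp only [map_smul, IsLinearMap.mk'_apply, smul_eq_mul, mul_comm]
    _ = f u := by rw [← map_sum, ← hu, IsLinearMap.mk'_apply]

theorem sum_mul_Lfun {ι : Type*} [Fintype ι] {E : ι → Matrix (Fin n) (Fin n) ℂ}
    {f : Matrix (Fin n) (Fin n) ℂ → ℝ} (hf : IsLinearMap ℝ f) {x p : Matrix (Fin n) (Fin n) ℂ}
    (hE : jordanProd x p = ∑ α, (jInner (E α) (jordanProd x p) : ℂ) • E α) :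
    ∑ α, f (E α) * Lfun x p (E α) = f (jordanProd x p) := by
  simp only [Lfun, jInner_jordanProd_assoc, sum_mul_jInner hf hE]

theorem trace_mul_commutator_jordanProd (x p : Matrix (Fin n) (Fin n) ℂ) :
    (x * (jordanProd x p * p - p * jordanProd x p)).trace = 0 := by
  have hcomm : jordanProd x p * p - p * jordanProd x p =
      (1 / 2 : ℂ) • (x * (p * p) - p * p * x) := by
    simp only [jordanProd, Matrix.mul_smul, Matrix.smul_mul, mul_add, add_mul, mul_assoc]
    module
  rw [hcomm, Matrix.mul_smul, trace_smul, mul_sub, trace_sub, trace_mul_comm x (p * p * x),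
    mul_assoc (p * p), trace_mul_comm (p * p), mul_assoc, sub_self, smul_zero]

theorem trace_mul_jordanProd {x : Matrix (Fin n) (Fin n) ℂ} (hrank : x.rank ≤ 1)
    (p : Matrix (Fin n) (Fin n) ℂ) :
    (x * jordanProd x p).trace = (x * p).trace * x.trace := by
  have hxxp : (x * (x * p)).trace = (x * p).trace * x.trace := by
    simpa [mul_assoc, mul_comm] using trace_mul_mul_mul_of_rank_le_one hrank 1 p
  have hxpx : (x * (p * x)).trace = (x * (x * p)).trace := by
    rw [← mul_assoc, trace_mul_comm]
  rw [jordanProd, Matrix.mul_smul, trace_smul, mul_add, trace_add, hxpx, hxxp, smul_eq_mul]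
  ring

theorem trace_mul_mul_jordanProd_mul {x : Matrix (Fin n) (Fin n) ℂ} (hrank : x.rank ≤ 1)
    (p : Matrix (Fin n) (Fin n) ℂ) :
    (x * (p * jordanProd x p * p)).trace = (x * p).trace * (x * (p * p)).trace := by
  have hleft : (x * (p * (x * (p * p)))).trace = (x * p).trace * (x * (p * p)).trace := by
    simpa only [mul_assoc] using trace_mul_mul_mul_of_rank_le_one hrank p (p * p)
  have hright : (x * (p * (p * (x * p)))).trace = (x * (p * (x * (p * p)))).trace := by
    simpa only [mul_assoc] using trace_mul_comm (x * p * p) (x * p)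
  simp only [jordanProd, Matrix.mul_smul, Matrix.smul_mul, mul_add, add_mul, trace_smul,
    trace_add, mul_assoc, hright, hleft, smul_eq_mul]
  ring

theorem Yfun_jordanProd {x p : Matrix (Fin n) (Fin n) ℂ} (hrank : x.rank ≤ 1)
    (hx : x.IsHermitian) (hp : p.IsHermitian) :
    Yfun x (jordanProd x p) = (x * p).trace.re * Yfun x 1 := by
  have him : (x * p).trace.im = 0 := Complex.conj_eq_iff_im.mp (isSelfAdjoint_trace_mul hx hp)
  simp only [Yfun, jInner, trace_mul_comm _ x, trace_mul_jordanProd hrank, Complex.mul_re, him,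
    mul_one]
  ring

theorem Xfun_jordanProd (μ : ℝ) {x p : Matrix (Fin n) (Fin n) ℂ} (hrank : x.rank ≤ 1)
    (hx : x.IsHermitian) (hp : p.IsHermitian) :
    Xfun μ x p (jordanProd x p) = (x * p).trace.re * Xfun μ x p 1 := by
  have him : (x * p).trace.im = 0 := Complex.conj_eq_iff_im.mp (isSelfAdjoint_trace_mul hx hp)
  simp only [Xfun, jInner, jTriple_self, trace_mul_mul_jordanProd_mul hrank,
    trace_mul_jordanProd hrank, trace_mul_commutator_jordanProd, Complex.mul_re, him, mul_one,
    one_mul, sub_self, mul_zero, trace_zero, Complex.zero_re]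
  ring

end Jordan

theorem quadratic_relation_ii_general {n : ℕ} (μ : ℝ) {x p : Matrix (Fin n) (Fin n) ℂ}
    (hx : x.IsHermitian) (hrank : x.rank = 1) (hp : p.IsHermitian)
    {ι : Type*} [Fintype ι] {E : ι → Matrix (Fin n) (Fin n) ℂ}
    (hE : ∀ u : Matrix (Fin n) (Fin n) ℂ, u.IsHermitian →
      u = ∑ α, (jInner (E α) u : ℂ) • E α) :
    (∑ α, Xfun μ x p (E α) * Lfun x p (E α)) = (n : ℝ) * Xfun μ x p 1 * Lfun x p 1 ∧
    (∑ α, Yfun x (E α) * Lfun x p (E α)) = (n : ℝ) * Yfun x 1 * Lfun x p 1 := by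
  have hexp := hE _ (isHermitian_jordanProd hx hp)
  constructor
  · rw [sum_mul_Lfun (isLinearMap_Xfun μ x p) hexp, Xfun_jordanProd μ hrank.le hx hp,
      mul_right_comm, natCast_mul_Lfun_one]
  · rw [sum_mul_Lfun (isLinearMap_Yfun x) hexp, Yfun_jordanProd hrank.le hx hp,
      mul_right_comm, natCast_mul_Lfun_one]

theorem quadratic_relation_ii
    (n : ℕ) (hn : 2 ≤ n) (μ : ℝ)
    (x : Matrix (Fin n) (Fin n) ℂ)
    (hherm : x.IsHermitian) (hpsd : x.PosSemidef) (hrank : x.rank = 1)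
    (p w : Matrix (Fin n) (Fin n) ℂ) (hw : w.IsHermitian) (hp : p = jordanProd x w)
    (E : Fin (n ^ 2) → Matrix (Fin n) (Fin n) ℂ)
    (hEherm : ∀ α, (E α).IsHermitian)
    (hEorth : ∀ α β, jInner (E α) (E β) = if α = β then 1 else 0)
    (hEspan : ∀ u : Matrix (Fin n) (Fin n) ℂ, u.IsHermitian →
      u = ∑ α, (jInner (E α) u : ℂ) • E α)
    :
    (∑ α, Xfun μ x p (E α) * Lfun x p (E α)) = (n : ℝ) * Xfun μ x p 1 * Lfun x p 1 ∧
    (∑ α, Yfun x (E α) * Lfun x p (E α)) = (n : ℝ) * Yfun x 1 * Lfun x p 1 := by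
  exact quadratic_relation_ii_general μ hherm hrank (hp ▸ isHermitian_jordanProd hherm hw) hEspan
end

section
/- Theorem 6.1(vii): with the notation of the context, (4/n³)·Σ_{α,β} 𝓛_{e_α,e_β}² = 𝒳_e·𝒴_e − 𝓛_e² + ((n−2)/n)·μ². -/
open Matrix
open scoped ComplexOrder

/-!
By trace duality `𝓛_{u,v}` is the trace of `[u,v]` against the fixed matrix
`K = [x,π]/(4n) − (iμ/(2 tr x)) x`. An orthonormal basis of the hermitian matrices is dual to
itself under the trace form, so the double sum of squares is the Casimir expression
`2n² ((tr K)² − n tr K²)`. Since `x` has rank one, `x A x = tr(x A) x` for every `A`, and this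
reduces both traces to `tr x`, `tr (x π)` and `tr (x π²)`.
-/

section TraceForm

variable {m R : Type*} [Fintype m] [CommRing R]

theorem trace_lie_mul (A B C : Matrix m m R) : (⁅A, B⁆ * C).trace = (A * ⁅B, C⁆).trace := by
  simp only [Ring.lie_def, sub_mul, mul_sub, trace_sub, Matrix.mul_assoc]
  rw [trace_mul_comm B (A * C), Matrix.mul_assoc]

theorem trace_lie_mul_self (A B : Matrix m m R) : (⁅A, B⁆ * A).trace = 0 := by
  rw [trace_mul_comm, ← trace_lie_mul, Ring.lie_def, sub_self, zero_mul, trace_zero]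

theorem trace_lie_mul_lie_self (A B : Matrix m m R) :
    (⁅A, B⁆ * ⁅A, B⁆).trace = 2 * ((A * B * A * B).trace - (A * A * (B * B)).trace) := by
  have h_outer : (A * B * (B * A)).trace = (A * A * (B * B)).trace := by
    rw [← Matrix.mul_assoc, trace_mul_comm]
    simp only [Matrix.mul_assoc]
  have h_inner : (B * A * (A * B)).trace = (A * A * (B * B)).trace := by
    rw [trace_mul_comm, h_outer]
  have h_alt : (B * A * (B * A)).trace = (A * B * (A * B)).trace := by
    rw [Matrix.mul_assoc, trace_mul_comm]
    simp only [Matrix.mul_assoc]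
  simp only [Ring.lie_def, sub_mul, mul_sub, trace_sub, h_outer, h_inner, h_alt,
    Matrix.mul_assoc (A * B) A B]
  ring

end TraceForm

section TraceFrame

variable {ι m R : Type*} [Fintype ι] [Fintype m] [CommRing R]

/-- A finite family `E` of square matrices is a trace frame of constant `c` if it is dual to itself,
up to the factor `c`, under the bilinear form `(A, B) ↦ tr (A * B)`. Having `c` on the right-hand
side, instead of `c⁻¹` on the left, allows an arbitrary commutative ring of coefficients. -/
def IsTraceFrame (c : R) (E : ι → Matrix m m R) : Prop :=
  ∀ A, ∑ α, (E α * A).trace • E α = c • A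

namespace IsTraceFrame

variable {c : R} {E : ι → Matrix m m R}

theorem sum_trace_mul_sq (hE : IsTraceFrame c E) (A : Matrix m m R) :
    ∑ α, (E α * A).trace ^ 2 = c * (A * A).trace := by
  have h := congrArg (fun B => (B * A).trace) (hE A)
  simpa only [Finset.sum_mul, trace_sum, Matrix.smul_mul, trace_smul, smul_eq_mul, ← sq] using h

theorem sum_mul_mul [DecidableEq m] (hE : IsTraceFrame c E) (A : Matrix m m R) :
    ∑ α, E α * A * E α = (c * A.trace) • (1 : Matrix m m R) := by
  ext i l
  have h_entry (k : m) : ∑ α, (E α * A) i k * E α k l = c * (A * single k i (1 : R)) k l := by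
    have h := congrFun (congrFun (hE (A * single k i 1)) k) l
    simpa only [← Matrix.mul_assoc, trace_mul_single, Matrix.sum_apply, Matrix.smul_apply,
      smul_eq_mul, MulOpposite.op_one, one_smul] using h
  calc (∑ α, E α * A * E α) i l = ∑ k, ∑ α, (E α * A) i k * E α k l := by
        rw [Matrix.sum_apply, Finset.sum_comm]
        rfl
    _ = ∑ k, c * (A * single k i (1 : R)) k l := Finset.sum_congr rfl fun k _ => h_entry k
    _ = ((c * A.trace) • (1 : Matrix m m R)) i l := by
        by_cases h : i = l
        · subst h
          simp [trace, Finset.mul_sum]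
        · simp [h, Ne.symm h]

theorem sum_trace_lie_mul_sq (hE : IsTraceFrame c E) (K : Matrix m m R) :
    ∑ α, ∑ β, (⁅E α, E β⁆ * K).trace ^ 2
      = 2 * c ^ 2 * (K.trace ^ 2 - Fintype.card m * (K * K).trace) := by
  classical
  calc ∑ α, ∑ β, (⁅E α, E β⁆ * K).trace ^ 2
      = ∑ β, ∑ α, (E α * ⁅E β, K⁆).trace ^ 2 := by
        simp only [trace_lie_mul]
        exact Finset.sum_comm
    _ = ∑ β, c * (2 * ((E β * K * E β * K).trace - (E β * 1 * E β * (K * K)).trace)) := by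
        simp only [hE.sum_trace_mul_sq, trace_lie_mul_lie_self, mul_one]
    _ = c * (2 * (((∑ β, E β * K * E β) * K).trace
          - ((∑ β, E β * 1 * E β) * (K * K)).trace)) := by
        simp only [← Finset.mul_sum, Finset.sum_sub_distrib, ← trace_sum, ← Finset.sum_mul]
    _ = 2 * c ^ 2 * (K.trace ^ 2 - Fintype.card m * (K * K).trace) := by
        simp only [hE.sum_mul_mul, Matrix.smul_mul, one_mul, trace_smul, trace_one, smul_eq_mul]
        ring

end IsTraceFrame

end TraceFrame

section RankOne

theorem exists_eq_vecMulVec_of_rank_le_one_s16 {l m F : Type*} [Fintype m] [Field F]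
    {A : Matrix l m F} (hA : A.rank ≤ 1) : ∃ a b, A = vecMulVec a b := by
  have := Module.Finite.span_of_finite F (Set.finite_range A.col)
  rw [rank_eq_finrank_span_cols, finrank_le_one_iff] at hA
  obtain ⟨⟨a, _⟩, h_span⟩ := hA
  have h_col (j : m) : ∃ c : F, c • a = A.col j := by
    obtain ⟨c, hc⟩ := h_span ⟨A.col j, Submodule.subset_span ⟨j, rfl⟩⟩
    exact ⟨c, congrArg Subtype.val hc⟩
  choose b hb using h_col
  refine ⟨a, b, ?_⟩
  ext i j
  rw [vecMulVec_apply, mul_comm]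
  exact (congrFun (hb j) i).symm

variable {m F : Type*} [Fintype m] [Field F] {x : Matrix m m F}

theorem mul_mul_self_of_rank_le_one (hx : x.rank ≤ 1) (A : Matrix m m F) :
    x * A * x = (x * A).trace • x := by
  obtain ⟨a, b, rfl⟩ := exists_eq_vecMulVec_of_rank_le_one_s16 hx
  rw [vecMulVec_mul, vecMulVec_mul_vecMulVec, trace_vecMulVec, vecMulVec_smul, dotProduct_comm]

theorem mul_self_of_rank_le_one (hx : x.rank ≤ 1) : x * x = x.trace • x := by
  classical
  simpa only [mul_one] using mul_mul_self_of_rank_le_one hx 1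

theorem trace_lie_mul_lie_self_of_rank_le_one (hx : x.rank ≤ 1) (p : Matrix m m F) :
    (⁅x, p⁆ * ⁅x, p⁆).trace = 2 * ((x * p).trace ^ 2 - x.trace * (x * (p * p)).trace) := by
  rw [trace_lie_mul_lie_self, mul_mul_self_of_rank_le_one hx, mul_self_of_rank_le_one hx,
    Matrix.smul_mul, Matrix.smul_mul, trace_smul, trace_smul, smul_eq_mul, smul_eq_mul, ← sq]

theorem trace_ne_zero_of_isHermitian_of_rank_eq_one {x : Matrix m m ℂ} (hx : x.IsHermitian)
    (hrank : x.rank = 1) : x.trace ≠ 0 := by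
  intro h_trace
  have h_sq : xᴴ * x = 0 := by
    rw [hx.eq, mul_self_of_rank_le_one hrank.le, h_trace, zero_smul]
  rw [conjTranspose_mul_self_eq_zero.mp h_sq, rank_zero] at hrank
  exact zero_ne_one hrank

end RankOne

section Hermitian

variable {m : Type*} [Fintype m] {A B : Matrix m m ℂ}

theorem ofReal_re_trace (hA : A.IsHermitian) : (A.trace.re : ℂ) = A.trace := by
  rw [← Complex.conj_eq_iff_re, starRingEnd_apply, ← trace_conjTranspose, hA.eq]

theorem ofReal_re_trace_mul (hA : A.IsHermitian) (hB : B.IsHermitian) :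
    ((A * B).trace.re : ℂ) = (A * B).trace := by
  rw [← Complex.conj_eq_iff_re, starRingEnd_apply, ← trace_conjTranspose, conjTranspose_mul,
    hA.eq, hB.eq, trace_mul_comm]

theorem isHermitian_I_smul_lie (hA : A.IsHermitian) (hB : B.IsHermitian) :
    (Complex.I • ⁅A, B⁆).IsHermitian := by
  rw [IsHermitian, conjTranspose_smul, Ring.lie_def, conjTranspose_sub, conjTranspose_mul,
    conjTranspose_mul, hA.eq, hB.eq, Complex.star_def, Complex.conj_I, neg_smul, ← smul_neg,
    neg_sub]

theorem isTraceFrame_of_forall_isHermitian {ι : Type*} [Fintype ι] {c : ℂ}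
    {E : ι → Matrix m m ℂ}
    (hE : ∀ A : Matrix m m ℂ, A.IsHermitian → ∑ α, (E α * A).trace • E α = c • A) :
    IsTraceFrame c E := by
  intro A
  obtain ⟨P, Q, hP, hQ, rfl⟩ :
      ∃ P Q : Matrix m m ℂ, P.IsHermitian ∧ Q.IsHermitian ∧ A = P + Complex.I • Q :=
    ⟨realPart A, imaginaryPart A, (realPart A).2, (imaginaryPart A).2,
      (realPart_add_I_smul_imaginaryPart A).symm⟩
  simp only [mul_add, Matrix.mul_smul, trace_add, trace_smul, add_smul, smul_assoc,
    Finset.sum_add_distrib, ← Finset.smul_sum, hE P hP, hE Q hQ, smul_add]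
  rw [smul_comm]

end Hermitian

section JordanAlgebra

variable {n : ℕ} {u v x p : Matrix (Fin n) (Fin n) ℂ}

theorem isHermitian_jordanProd_s16 (hu : u.IsHermitian) (hv : v.IsHermitian) :
    (jordanProd u v).IsHermitian := by
  rw [IsHermitian, jordanProd, conjTranspose_smul, conjTranspose_add, conjTranspose_mul,
    conjTranspose_mul, hu.eq, hv.eq, add_comm]
  simp

theorem jordanProd_jordanProd_sub (u v x : Matrix (Fin n) (Fin n) ℂ) :
    jordanProd u (jordanProd v x) - jordanProd v (jordanProd u x)
      = (1 / 4 : ℂ) • ⁅⁅u, v⁆, x⁆ := by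
  simp only [jordanProd, Ring.lie_def, Matrix.mul_smul, Matrix.smul_mul, mul_add, add_mul,
    mul_sub, sub_mul, Matrix.mul_assoc]
  module

theorem one_jordanProd (x : Matrix (Fin n) (Fin n) ℂ) : jordanProd 1 x = x := by
  simp only [jordanProd, one_mul, mul_one]
  module

theorem jTriple_one_self (p : Matrix (Fin n) (Fin n) ℂ) : jTriple p 1 p = p * p := by
  simp only [jTriple, jordanProd, Matrix.mul_smul, Matrix.smul_mul, mul_add, add_mul, mul_one,
    one_mul]
  module

theorem ofReal_jInner (hu : u.IsHermitian) (hv : v.IsHermitian) :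
    (jInner u v : ℂ) = 1 / n * (u * v).trace := by
  rw [jInner, Complex.ofReal_mul, ofReal_re_trace_mul hu hv]
  push_cast
  rfl

theorem isTraceFrame_of_jInner_expansion {ι : Type*} [Fintype ι]
    {E : ι → Matrix (Fin n) (Fin n) ℂ} (hherm : ∀ α, (E α).IsHermitian)
    (hspan : ∀ u : Matrix (Fin n) (Fin n) ℂ, u.IsHermitian →
      u = ∑ α, (jInner (E α) u : ℂ) • E α) :
    IsTraceFrame (n : ℂ) E := by
  obtain rfl | hn := eq_or_ne n 0
  · exact fun _ => Subsingleton.elim _ _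
  refine isTraceFrame_of_forall_isHermitian fun u hu => ?_
  conv_rhs => rw [hspan u hu, Finset.smul_sum]
  refine Finset.sum_congr rfl fun α _ => ?_
  rw [ofReal_jInner (hherm α) hu, smul_smul, ← mul_assoc,
    mul_one_div_cancel (Nat.cast_ne_zero.mpr hn), one_mul]

theorem ofReal_Yfun_one (hx : x.IsHermitian) : (Yfun x 1 : ℂ) = 1 / n * x.trace := by
  rw [Yfun, ofReal_jInner isHermitian_one hx, one_mul]

theorem ofReal_Lfun_one (hx : x.IsHermitian) (hp : p.IsHermitian) :
    (Lfun x p 1 : ℂ) = 1 / n * (x * p).trace := by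
  rw [Lfun, one_jordanProd, ofReal_jInner hx hp]

theorem ofReal_Xfun_one (μ : ℝ) (hx : x.IsHermitian) (hp : p.IsHermitian) :
    (Xfun μ x p 1 : ℂ)
      = 1 / n * (x * (p * p)).trace + n * μ ^ 2 * x.trace / x.trace ^ 2 := by
  have hpp : (p * p).IsHermitian := (hp.commute_iff hp).mp (Commute.refl p)
  simp only [Xfun, jTriple_one_self, one_mul, mul_one, sub_self, mul_zero, trace_zero,
    Complex.zero_re, zero_div, sub_zero]
  push_cast
  rw [ofReal_jInner hx hpp, ofReal_re_trace hx]

/-- The matrix `K` with `𝓛_{u,v} = tr ([u,v] * K)` for all hermitian `u` and `v`. -/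
noncomputable def angularMomentumMatrix (μ : ℝ) (x p : Matrix (Fin n) (Fin n) ℂ) :
    Matrix (Fin n) (Fin n) ℂ :=
  (1 / (4 * n) : ℂ) • ⁅x, p⁆ - (Complex.I * μ / (2 * x.trace)) • x

theorem ofReal_LLfun (μ : ℝ) (hx : x.IsHermitian) (hp : p.IsHermitian) (hu : u.IsHermitian)
    (hv : v.IsHermitian) :
    (LLfun μ x p u v : ℂ) = (⁅u, v⁆ * angularMomentumMatrix μ x p).trace := by
  have h_jordan : (jInner (jordanProd u (jordanProd v x) - jordanProd v (jordanProd u x)) p : ℂ)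
      = 1 / (4 * n) * (⁅u, v⁆ * ⁅x, p⁆).trace := by
    have h_herm := (isHermitian_jordanProd_s16 hu (isHermitian_jordanProd_s16 hv hx)).sub
      (isHermitian_jordanProd_s16 hv (isHermitian_jordanProd_s16 hu hx))
    rw [ofReal_jInner h_herm hp, jordanProd_jordanProd_sub, Matrix.smul_mul, trace_smul,
      trace_lie_mul ⁅u, v⁆, smul_eq_mul]
    ring
  have h_magnetic : ((Complex.I * (x * ⁅u, v⁆).trace).re : ℂ)
      = Complex.I * (x * ⁅u, v⁆).trace := by
    have h := ofReal_re_trace_mul hx (isHermitian_I_smul_lie hu hv)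
    rwa [Matrix.mul_smul, trace_smul, smul_eq_mul] at h
  rw [LLfun, ← Ring.lie_def u v, Complex.ofReal_sub, h_jordan, angularMomentumMatrix]
  push_cast
  rw [h_magnetic, ofReal_re_trace hx, trace_mul_comm x, mul_sub, trace_sub, Matrix.mul_smul,
    Matrix.mul_smul, trace_smul, trace_smul, smul_eq_mul, smul_eq_mul]
  ring

theorem trace_angularMomentumMatrix (μ : ℝ) (hx : x.trace ≠ 0) :
    (angularMomentumMatrix μ x p).trace = -(Complex.I * μ / 2) := by
  rw [angularMomentumMatrix, trace_sub, trace_smul, trace_smul, Ring.lie_def, trace_sub,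
    trace_mul_comm x p, sub_self, smul_zero, zero_sub, smul_eq_mul]
  field_simp

theorem trace_angularMomentumMatrix_mul_self (μ : ℝ) (hx : x.trace ≠ 0) (hrank : x.rank ≤ 1) :
    (angularMomentumMatrix μ x p * angularMomentumMatrix μ x p).trace
      = ((x * p).trace ^ 2 - x.trace * (x * (p * p)).trace) / (8 * n ^ 2) - μ ^ 2 / 4 := by
  have h_cross : (x * ⁅x, p⁆).trace = 0 := by rw [trace_mul_comm, trace_lie_mul_self]
  simp only [angularMomentumMatrix, sub_mul, mul_sub, Matrix.smul_mul, Matrix.mul_smul, trace_sub,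
    trace_smul, smul_eq_mul, trace_lie_mul_self, h_cross,
    trace_lie_mul_lie_self_of_rank_le_one hrank, mul_self_of_rank_le_one hrank]
  have h_cancel : Complex.I * μ / (2 * x.trace) * x.trace = Complex.I * μ / 2 := by field_simp
  linear_combination (Complex.I * μ / (2 * x.trace) * x.trace + Complex.I * μ / 2) * h_cancel
    + (μ : ℂ) ^ 2 / 4 * Complex.I_sq

end JordanAlgebra

theorem quadratic_relation_vii_general {ι : Type*} [Fintype ι] {n : ℕ} (μ : ℝ)
    {x p : Matrix (Fin n) (Fin n) ℂ} (hx : x.IsHermitian) (hrank : x.rank = 1)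
    (hp : p.IsHermitian) {E : ι → Matrix (Fin n) (Fin n) ℂ} (hEherm : ∀ α, (E α).IsHermitian)
    (hEspan : ∀ u : Matrix (Fin n) (Fin n) ℂ, u.IsHermitian →
      u = ∑ α, (jInner (E α) u : ℂ) • E α) :
    (4 / (n : ℝ) ^ 3) * (∑ α, ∑ β, (LLfun μ x p (E α) (E β)) ^ 2)
      = Xfun μ x p 1 * Yfun x 1 - (Lfun x p 1) ^ 2 + (((n : ℝ) - 2) / (n : ℝ)) * μ ^ 2 := by
  have hn : (n : ℂ) ≠ 0 :=
    Nat.cast_ne_zero.mpr (Nat.one_le_iff_ne_zero.mp (hrank.ge.trans x.rank_le_width))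
  have h_trace := trace_ne_zero_of_isHermitian_of_rank_eq_one hx hrank
  have h_sum := (isTraceFrame_of_jInner_expansion hEherm hEspan).sum_trace_lie_mul_sq
    (angularMomentumMatrix μ x p)
  rw [trace_angularMomentumMatrix μ h_trace,
    trace_angularMomentumMatrix_mul_self μ h_trace hrank.le, Fintype.card_fin] at h_sum
  apply Complex.ofReal_injective
  push_cast
  simp only [ofReal_LLfun μ hx hp (hEherm _) (hEherm _)]
  rw [h_sum, ofReal_Xfun_one μ hx hp, ofReal_Yfun_one hx, ofReal_Lfun_one hx hp, neg_sq, div_pow,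
    mul_pow, Complex.I_sq]
  field_simp
  ring

theorem quadratic_relation_vii
    (n : ℕ) (hn : 2 ≤ n) (μ : ℝ)
    (x : Matrix (Fin n) (Fin n) ℂ)
    (hherm : x.IsHermitian) (hpsd : x.PosSemidef) (hrank : x.rank = 1)
    (p w : Matrix (Fin n) (Fin n) ℂ) (hw : w.IsHermitian) (hp : p = jordanProd x w)
    (E : Fin (n ^ 2) → Matrix (Fin n) (Fin n) ℂ)
    (hEherm : ∀ α, (E α).IsHermitian)
    (hEorth : ∀ α β, jInner (E α) (E β) = if α = β then 1 else 0)
    (hEspan : ∀ u : Matrix (Fin n) (Fin n) ℂ, u.IsHermitian →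
      u = ∑ α, (jInner (E α) u : ℂ) • E α)
    :
    (4 / (n : ℝ) ^ 3) * (∑ α, ∑ β, (LLfun μ x p (E α) (E β)) ^ 2)
      = Xfun μ x p 1 * Yfun x 1 - (Lfun x p 1) ^ 2 + (((n : ℝ) - 2) / (n : ℝ)) * μ ^ 2 := by
  subst hp
  exact quadratic_relation_vii_general μ hherm hrank (isHermitian_jordanProd_s16 hherm hw) hEherm hEspan
end
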